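/- A symmetric matrix over ℤ₂ is uniquely determined up to congruence by its rank together with the boolean invariant diag(A) (whether A has any non-zero diagonal entry). In particular: if all diagonal entries of A vanish, the rank of A is even and A is congruent to a direct sum of rank(A)/2 copies of [[0,1],[1,0]] and a zero block; if some diagonal entry is non-zero, A is congruent to I_r ⊕ 0 with r = rank(A). -/

import Mathlib

open Matrix

/-!
Eliminate with block pivots: if a principal block of a symmetric matrix is invertible, the matrix
is congruent to the direct sum of that block and its Schur complement. When the diagonal vanishes,
any non-zero entry gives a hyperbolic `2 × 2` pivot, and in characteristic two the Schur
complement again has zero diagonal. When the diagonal does not vanish, a non-zero diagonal entry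
is a square and gives a `1 × 1` pivot. Its complement `S` might have zero diagonal without being
zero; replacing the pivot vector `e` by `e + eᵢ` changes the complement to `S - S eᵢ eᵢᵀ S`, whose
`j`-th diagonal entry is `-Sⱼᵢ²`, so the elimination can always continue with `1 × 1` pivots. Each
pivot lowers the rank by its size, so the normal form reached is determined by the rank.
-/

theorem rank_fromBlocks_zero_zero {l m n o K : Type*} [Fintype m] [Fintype n] [Finite l] [Finite o]
    [Field K] (A : Matrix l m K) (D : Matrix o n K) :
    (fromBlocks A 0 0 D).rank = A.rank + D.rank := by
  let f := A.mulVecLin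
  let g := D.mulVecLin
  have hprod : (fromBlocks A 0 0 D).mulVecLin =
      (LinearEquiv.sumArrowLequivProdArrow l o K K).symm.toLinearMap ∘ₗ f.prodMap g ∘ₗ
        (LinearEquiv.sumArrowLequivProdArrow m n K K).toLinearMap := by
    refine LinearMap.ext fun x => funext fun i => ?_
    rw [mulVecLin_apply, fromBlocks_mulVec]
    rcases i with i | i <;> simp only [zero_mulVec, add_zero, zero_add] <;> rfl
  have hrange : Module.finrank K (f.range.prod g.range) =
      Module.finrank K f.range + Module.finrank K g.range := by
    have hinj : Function.Injective (f.range.subtype.prodMap g.range.subtype) :=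
      f.range.injective_subtype.prodMap g.range.injective_subtype
    have := LinearMap.finrank_range_of_inj hinj
    rwa [LinearMap.range_prodMap, Submodule.range_subtype, Submodule.range_subtype,
      Module.finrank_prod] at this
  rw [rank, hprod, LinearMap.range_comp, LinearEquiv.finrank_map_eq, LinearMap.range_comp,
    LinearEquiv.range, Submodule.map_top, LinearMap.range_prodMap, hrange]
  rfl

theorem dotProduct_mulVec_self_eq_zero {m R : Type*} [Fintype m] [CommRing R] [CharP R 2]
    {A : Matrix m m R} (hA : A.IsSymm) (hA₀ : A.diag = 0) (x : m → R) : x ⬝ᵥ A *ᵥ x = 0 := by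
  have hsum : x ⬝ᵥ A *ᵥ x = ∑ p : m × m, x p.1 * A p.1 p.2 * x p.2 := by
    simp only [dotProduct, mulVec, Finset.mul_sum, Fintype.sum_prod_type, mul_assoc]
  rw [hsum]
  -- The terms at `(i, j)` and `(j, i)` cancel.
  refine Finset.sum_involution (fun p _ => p.swap) ?_ ?_ (by simp) (by simp)
  · rintro ⟨i, j⟩ -
    rw [Prod.swap, hA.apply i j, CharTwo.add_eq_zero]
    ring
  · rintro ⟨i, j⟩ - hne heq
    obtain rfl : j = i := congrArg Prod.fst heq
    have hii : A j j = 0 := congrFun hA₀ j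
    simp [hii] at hne

/-- Congruence `B = P * A * Pᵀ` of square matrices by an invertible `P`. The two index types may
differ, so that matrices indexed by sums can be compared with matrices indexed by `Fin n`;
invertibility of the possibly heterogeneous `P` is expressed by a two-sided inverse `Q`. -/
def MatrixCongruent {m n R : Type*} [Fintype m] [Fintype n] [DecidableEq m] [DecidableEq n]
    [CommRing R] (A : Matrix m m R) (B : Matrix n n R) : Prop :=
  ∃ (P : Matrix n m R) (Q : Matrix m n R), P * Q = 1 ∧ Q * P = 1 ∧ P * A * Pᵀ = B

namespace MatrixCongruent

section CommRing

variable {l m n p R : Type*} [Fintype l] [Fintype m] [Fintype n] [Fintype p]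
  [DecidableEq l] [DecidableEq m] [DecidableEq n] [DecidableEq p] [CommRing R]

theorem of_isUnit {P : Matrix n n R} (hP : IsUnit P) (A : Matrix n n R) :
    MatrixCongruent A (P * A * Pᵀ) := by
  obtain ⟨P, rfl⟩ := hP
  exact ⟨P, ↑P⁻¹, P.mul_inv, P.inv_mul, rfl⟩

theorem exists_isUnit {A B : Matrix n n R} (h : MatrixCongruent A B) :
    ∃ P : Matrix n n R, IsUnit P ∧ P * A * Pᵀ = B := by
  obtain ⟨P, Q, hPQ, -, hB⟩ := h
  exact ⟨P, IsUnit.of_mul_eq_one Q hPQ, hB⟩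

theorem refl (A : Matrix m m R) : MatrixCongruent A A :=
  ⟨1, 1, by simp, by simp, by simp⟩

theorem symm {A : Matrix m m R} {B : Matrix n n R} (h : MatrixCongruent A B) :
    MatrixCongruent B A := by
  obtain ⟨P, Q, hPQ, hQP, rfl⟩ := h
  refine ⟨Q, P, hQP, hPQ, ?_⟩
  calc Q * (P * A * Pᵀ) * Qᵀ = (Q * P) * A * (Q * P)ᵀ := by
        simp only [transpose_mul, Matrix.mul_assoc]
    _ = A := by simp [hQP]

theorem trans {A : Matrix m m R} {B : Matrix n n R} {C : Matrix p p R}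
    (hAB : MatrixCongruent A B) (hBC : MatrixCongruent B C) : MatrixCongruent A C := by
  obtain ⟨P, Q, hPQ, hQP, rfl⟩ := hAB
  obtain ⟨P', Q', hPQ', hQP', rfl⟩ := hBC
  refine ⟨P' * P, Q * Q', ?_, ?_, by simp only [transpose_mul, Matrix.mul_assoc]⟩
  · rw [Matrix.mul_assoc, ← Matrix.mul_assoc P, hPQ, Matrix.one_mul, hPQ']
  · rw [Matrix.mul_assoc, ← Matrix.mul_assoc Q', hQP', Matrix.one_mul, hQP]

theorem submatrix_equiv (A : Matrix m m R) (e : n ≃ m) :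
    MatrixCongruent A (A.submatrix e e) := by
  refine ⟨(1 : Matrix m m R).submatrix e id, (1 : Matrix m m R).submatrix id e, ?_, ?_, ?_⟩
  · rw [← submatrix_mul _ _ e id e Function.bijective_id, Matrix.one_mul, submatrix_one_equiv]
  · rw [submatrix_mul_equiv, Matrix.one_mul, submatrix_id_id]
  · ext i j
    simp [mul_apply, one_apply]

theorem fromBlocks_congr {A : Matrix m m R} {B : Matrix n n R} {A' : Matrix l l R}
    {B' : Matrix p p R} (h : MatrixCongruent A B) (h' : MatrixCongruent A' B') :
    MatrixCongruent (fromBlocks A 0 0 A') (fromBlocks B 0 0 B') := by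
  obtain ⟨P, Q, hPQ, hQP, rfl⟩ := h
  obtain ⟨P', Q', hPQ', hQP', rfl⟩ := h'
  exact ⟨fromBlocks P 0 0 P', fromBlocks Q 0 0 Q',
    by simp [fromBlocks_multiply, hPQ, hPQ'], by simp [fromBlocks_multiply, hQP, hQP'],
    by simp [fromBlocks_multiply, fromBlocks_transpose]⟩

theorem isSymm {A : Matrix m m R} {B : Matrix n n R} (h : MatrixCongruent A B)
    (hA : A.IsSymm) : B.IsSymm := by
  obtain ⟨P, Q, -, -, rfl⟩ := h
  simp [IsSymm, transpose_mul, hA.eq, Matrix.mul_assoc]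

theorem rank_le [StrongRankCondition R] {A : Matrix m m R} {B : Matrix n n R}
    (h : MatrixCongruent A B) : B.rank ≤ A.rank := by
  obtain ⟨P, Q, -, -, rfl⟩ := h
  exact (rank_mul_le_left _ _).trans (rank_mul_le_right _ _)

theorem rank_eq [StrongRankCondition R] {A : Matrix m m R} {B : Matrix n n R}
    (h : MatrixCongruent A B) : A.rank = B.rank :=
  h.symm.rank_le.antisymm h.rank_le

theorem diag_eq_zero [CharP R 2] {A : Matrix m m R} {B : Matrix n n R}
    (h : MatrixCongruent A B) (hA : A.IsSymm) (hA₀ : A.diag = 0) : B.diag = 0 := by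
  obtain ⟨P, Q, -, -, rfl⟩ := h
  ext i
  calc (P * A * Pᵀ) i i = P i ⬝ᵥ A *ᵥ P i := by
        rw [dotProduct_mulVec]
        rfl
    _ = 0 := dotProduct_mulVec_self_eq_zero hA hA₀ (P i)

end CommRing

section Pivots

variable {κ m n R : Type*} [Fintype κ] [Fintype m] [Fintype n]
  [DecidableEq κ] [DecidableEq m] [DecidableEq n] [CommRing R]

theorem fromBlocks_schur {A : Matrix m m R} (hA : A.IsSymm) (hu : IsUnit A) (C : Matrix n m R)
    (D : Matrix n n R) :
    MatrixCongruent (fromBlocks A Cᵀ C D) (fromBlocks A 0 0 (D - C * A⁻¹ * Cᵀ)) := by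
  have := hu.invertible
  have hP : IsUnit (fromBlocks 1 0 (C * ⅟A) 1) :=
    isUnit_fromBlocks_zero₁₂.mpr ⟨isUnit_one, isUnit_one⟩
  have hinv : (⅟A)ᵀ = ⅟A := by
    rw [invOf_eq_nonsing_inv, transpose_nonsing_inv, hA.eq]
  have hLDU := of_isUnit hP (fromBlocks A 0 0 (D - C * ⅟A * Cᵀ))
  simp only [fromBlocks_transpose, transpose_mul, transpose_one, transpose_zero, hinv] at hLDU
  rw [← fromBlocks_eq_of_invertible₁₁, invOf_eq_nonsing_inv] at hLDU
  exact hLDU.symm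

theorem fromBlocks_one_sub {S : Matrix n n R} (hS : S.IsSymm) {W : Matrix n κ R}
    (hW : Wᵀ * S * W = 0) :
    MatrixCongruent (fromBlocks (1 : Matrix κ κ R) 0 0 S)
      (fromBlocks (1 : Matrix κ κ R) 0 0 (S - S * W * (S * W)ᵀ)) := by
  have hP : IsUnit (fromBlocks (1 : Matrix κ κ R) Wᵀ 0 (1 : Matrix n n R)) :=
    isUnit_fromBlocks_zero₂₁.mpr ⟨isUnit_one, isUnit_one⟩
  have hshear :
      fromBlocks 1 Wᵀ 0 1 * fromBlocks (1 : Matrix κ κ R) 0 0 S * (fromBlocks 1 Wᵀ 0 1)ᵀ =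
        fromBlocks 1 (S * W)ᵀ (S * W) S := by
    simp [fromBlocks_transpose, fromBlocks_multiply, hW, hS.eq]
  have hschur := fromBlocks_schur isSymm_one isUnit_one (S * W) S
  rw [inv_one, Matrix.mul_one] at hschur
  exact (hshear ▸ of_isUnit hP _).trans hschur

theorem exists_fromBlocks_of_isUnit_submatrix {A : Matrix n n R} (hA : A.IsSymm) {f : κ → n}
    (hf : Function.Injective f) (hu : IsUnit (A.submatrix f f)) :
    ∃ (k : ℕ) (S : Matrix (Fin k) (Fin k) R), Fintype.card κ + k = Fintype.card n ∧ S.IsSymm ∧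
      MatrixCongruent A (fromBlocks (A.submatrix f f) 0 0 S) := by
  classical
  let e : κ ⊕ Fin (Fintype.card ↥(Set.range f)ᶜ) ≃ n :=
    ((Equiv.ofInjective f hf).sumCongr (Fintype.equivFin _).symm).trans
      (Equiv.Set.sumCompl (Set.range f))
  let C := A.submatrix (e ∘ Sum.inr) f
  let D := A.submatrix (e ∘ Sum.inr) (e ∘ Sum.inr)
  have hblocks : A.submatrix e e = fromBlocks (A.submatrix f f) Cᵀ C D := by
    ext (i | i) (j | j)
    · rfl
    · exact hA.apply _ _
    · rfl
    · rfl
  have hcongr : MatrixCongruent A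
      (fromBlocks (A.submatrix f f) 0 0 (D - C * (A.submatrix f f)⁻¹ * Cᵀ)) :=
    (hblocks ▸ submatrix_equiv A e).trans (fromBlocks_schur (hA.submatrix f) hu C D)
  exact ⟨_, _, by simpa using Fintype.card_congr e,
    (isSymm_fromBlocks_iff.mp (hcongr.isSymm hA)).2.2.2, hcongr⟩

theorem exists_fromBlocks_one_diag_ne_zero [IsReduced R] {S : Matrix n n R} (hS : S.IsSymm)
    (hS₀ : S.diag = 0) (hne : S ≠ 0) :
    ∃ T : Matrix n n R, T.IsSymm ∧ T.diag ≠ 0 ∧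
      MatrixCongruent (fromBlocks (1 : Matrix (Fin 1) (Fin 1) R) 0 0 S)
        (fromBlocks (1 : Matrix (Fin 1) (Fin 1) R) 0 0 T) := by
  obtain ⟨j, i, hji⟩ : ∃ j i, S j i ≠ 0 := by
    simpa [← ext_iff] using hne
  have hdiag (k : n) : S k k = 0 := congrFun hS₀ k
  let W : Matrix n (Fin 1) R := replicateCol (Fin 1) (Pi.single i 1)
  have hSW : S * W = replicateCol (Fin 1) (S.col i) := by
    rw [← replicateCol_mulVec, mulVec_single_one]
  have hW : Wᵀ * S * W = 0 := by
    rw [Matrix.mul_assoc, hSW]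
    ext
    simp [W, mul_apply, Pi.single_apply, hdiag]
  have hcongr := fromBlocks_one_sub hS hW
  refine ⟨_, (isSymm_fromBlocks_iff.mp (hcongr.isSymm ?_)).2.2.2, ?_, hcongr⟩
  · exact IsSymm.fromBlocks isSymm_one transpose_zero hS
  · refine Function.ne_iff.mpr ⟨j, ?_⟩
    simp [hSW, mul_apply, hdiag, ← sq, hji]

end Pivots

end MatrixCongruent

section NormalForms

variable (K : Type*) [Zero K] [One K]

/-- The matrix `I_r ⊕ 0` of size `n`, for `r ≤ n`. -/
def partialIdentity (n r : ℕ) : Matrix (Fin n) (Fin n) K :=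
  of fun i j => if i = j ∧ i.val < r then 1 else 0

/-- The direct sum of `r / 2` blocks `[[0, 1], [1, 0]]` and a zero block, of size `n`, for even
`r ≤ n`. The rows `2 * k` and `2 * k + 1` belong to the `k`-th block. -/
def hyperbolicSum (n r : ℕ) : Matrix (Fin n) (Fin n) K :=
  of fun i j => if i.val < r ∧ j.val < r ∧ i.val / 2 = j.val / 2 ∧ i ≠ j then 1 else 0

theorem partialIdentity_zero (n : ℕ) : partialIdentity K n 0 = 0 := by
  ext
  simp [partialIdentity]

theorem hyperbolicSum_zero (n : ℕ) : hyperbolicSum K n 0 = 0 := by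
  ext
  simp [hyperbolicSum]

theorem partialIdentity_add_submatrix (k n r : ℕ) :
    (partialIdentity K (k + n) (k + r)).submatrix finSumFinEquiv finSumFinEquiv =
      fromBlocks 1 0 0 (partialIdentity K n r) := by
  ext (i | i) (j | j) <;>
    simp only [partialIdentity, submatrix_apply, of_apply, finSumFinEquiv_apply_left,
      finSumFinEquiv_apply_right, fromBlocks_apply₁₁, fromBlocks_apply₁₂, fromBlocks_apply₂₁,
      fromBlocks_apply₂₂, one_apply, Matrix.zero_apply, Fin.ext_iff, Fin.val_castAdd,
      Fin.val_natAdd] <;>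
    grind

theorem hyperbolicSum_two_add_submatrix (n r : ℕ) :
    (hyperbolicSum K (2 + n) (2 + r)).submatrix finSumFinEquiv finSumFinEquiv =
      fromBlocks !![0, 1; 1, 0] 0 0 (hyperbolicSum K n r) := by
  ext (i | i) (j | j)
  · have hr : ¬2 + r ≤ 1 := by omega
    fin_cases i <;> fin_cases j <;> simp [hyperbolicSum, hr]
  all_goals
    simp only [hyperbolicSum, submatrix_apply, of_apply, finSumFinEquiv_apply_left,
      finSumFinEquiv_apply_right, fromBlocks_apply₁₂, fromBlocks_apply₂₁, fromBlocks_apply₂₂,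
      Matrix.zero_apply, ne_eq, Fin.ext_iff, Fin.val_castAdd, Fin.val_natAdd]
    grind

end NormalForms

namespace MatrixCongruent

variable {n : Type*} [Fintype n] [DecidableEq n] {K : Type*} [Field K]

theorem exists_fromBlocks_hyperbolic [CharP K 2] {A : Matrix n n K} (hA : A.IsSymm)
    (hA₀ : A.diag = 0) (hne : A ≠ 0) :
    ∃ (m : ℕ) (S : Matrix (Fin m) (Fin m) K), 2 + m = Fintype.card n ∧ S.IsSymm ∧ S.diag = 0 ∧
      MatrixCongruent A (fromBlocks !![0, 1; 1, 0] 0 0 S) := by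
  obtain ⟨i, j, hij⟩ : ∃ i j, A i j ≠ 0 := by
    simpa [← ext_iff] using hne
  have hdiag (k : n) : A k k = 0 := congrFun hA₀ k
  have hinj : Function.Injective ![i, j] := by
    have : i ≠ j := by
      rintro rfl
      exact hij (hdiag i)
    intro a b
    fin_cases a <;> fin_cases b <;> simp [this, this.symm]
  have hpivot : A.submatrix ![i, j] ![i, j] = !![0, A i j; A i j, 0] := by
    ext a b
    fin_cases a <;> fin_cases b <;> simp [hdiag, hA.apply i j]
  have hunit : IsUnit (A.submatrix ![i, j] ![i, j]) := by
    simp [hpivot, isUnit_iff_isUnit_det, hij]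
  have hscale : MatrixCongruent (A.submatrix ![i, j] ![i, j]) !![0, 1; 1, 0] := by
    have hP : IsUnit (!![(A i j)⁻¹, 0; 0, 1]) := by simp [isUnit_iff_isUnit_det, hij]
    convert of_isUnit hP (A.submatrix ![i, j] ![i, j]) using 1
    ext a b
    fin_cases a <;> fin_cases b <;> simp [hpivot, hij, mul_apply]
  obtain ⟨m, S, hm, hS, hAS⟩ := exists_fromBlocks_of_isUnit_submatrix hA hinj hunit
  refine ⟨m, S, hm, hS, ?_, hAS.trans (hscale.fromBlocks_congr (refl S))⟩
  ext k
  exact congrFun (hAS.diag_eq_zero hA hA₀) (Sum.inr k)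

theorem even_rank_and_hyperbolicSum_of_diag_eq_zero [CharP K 2] {N : ℕ}
    {A : Matrix (Fin N) (Fin N) K} (hA : A.IsSymm) (hA₀ : A.diag = 0) :
    Even A.rank ∧ MatrixCongruent A (hyperbolicSum K N A.rank) := by
  induction N using Nat.strong_induction_on with
  | _ N ih =>
  rcases eq_or_ne A 0 with rfl | hne
  · rw [rank_zero, hyperbolicSum_zero]
    exact ⟨Even.zero, refl 0⟩
  obtain ⟨m, S, hm, hS, hS₀, hAS⟩ := exists_fromBlocks_hyperbolic hA hA₀ hne
  obtain rfl : 2 + m = N := by simpa using hm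
  obtain ⟨heven, hSr⟩ := ih m (by omega) hS hS₀
  have hrank : A.rank = 2 + S.rank := by
    have hunit : IsUnit (!![0, 1; 1, 0] : Matrix (Fin 2) (Fin 2) K) := by
      simp [isUnit_iff_isUnit_det]
    rw [hAS.rank_eq, rank_fromBlocks_zero_zero, rank_of_isUnit _ hunit, Fintype.card_fin]
  rw [hrank]
  refine ⟨even_two.add heven, (hAS.trans ((refl _).fromBlocks_congr hSr)).trans ?_⟩
  rw [← hyperbolicSum_two_add_submatrix]
  exact (submatrix_equiv _ _).symm

theorem exists_fromBlocks_one (hsq : ∀ a : K, IsSquare a) {A : Matrix n n K} (hA : A.IsSymm)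
    (hA₁ : A.diag ≠ 0) :
    ∃ (m : ℕ) (S : Matrix (Fin m) (Fin m) K), 1 + m = Fintype.card n ∧ S.IsSymm ∧
      MatrixCongruent A (fromBlocks (1 : Matrix (Fin 1) (Fin 1) K) 0 0 S) := by
  obtain ⟨i, hi⟩ := Function.ne_iff.mp hA₁
  obtain ⟨c, hc⟩ := hsq (A i i)
  have hc0 : c ≠ 0 := by
    rintro rfl
    exact hi (by simpa using hc)
  have hscale : MatrixCongruent (1 : Matrix (Fin 1) (Fin 1) K) (A.submatrix ![i] ![i]) := by
    have hP : IsUnit (!![c]) := by simp [isUnit_iff_isUnit_det, hc0]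
    convert of_isUnit hP 1 using 1
    ext a b
    simpa [Subsingleton.elim a 0, Subsingleton.elim b 0, mul_apply] using hc
  have hunit : IsUnit (A.submatrix ![i] ![i]) := by
    rw [isUnit_iff_isUnit_det, det_fin_one]
    exact isUnit_iff_ne_zero.mpr hi
  obtain ⟨m, S, hm, hS, hAS⟩ := exists_fromBlocks_of_isUnit_submatrix hA
    (Function.injective_of_subsingleton ![i]) hunit
  exact ⟨m, S, hm, hS, hAS.trans (hscale.symm.fromBlocks_congr (refl S))⟩

theorem partialIdentity_of_diag_ne_zero (hsq : ∀ a : K, IsSquare a) {N : ℕ}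
    {A : Matrix (Fin N) (Fin N) K} (hA : A.IsSymm) (hA₁ : A.diag ≠ 0) :
    MatrixCongruent A (partialIdentity K N A.rank) := by
  induction N using Nat.strong_induction_on with
  | _ N ih =>
  obtain ⟨m, S, hm, hS, hAS⟩ := exists_fromBlocks_one hsq hA hA₁
  obtain rfl : 1 + m = N := by simpa using hm
  obtain ⟨T, hT, hT₁, hAT⟩ : ∃ T : Matrix (Fin m) (Fin m) K, T.IsSymm ∧
      (T = 0 ∨ T.diag ≠ 0) ∧
      MatrixCongruent A (fromBlocks (1 : Matrix (Fin 1) (Fin 1) K) 0 0 T) := by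
    by_cases hS₁ : S = 0 ∨ S.diag ≠ 0
    · exact ⟨S, hS, hS₁, hAS⟩
    · push Not at hS₁
      obtain ⟨T, hT, hT₁, hST⟩ := exists_fromBlocks_one_diag_ne_zero hS hS₁.2 hS₁.1
      exact ⟨T, hT, .inr hT₁, hAS.trans hST⟩
  have hTr : MatrixCongruent T (partialIdentity K m T.rank) := by
    rcases hT₁ with rfl | hT₁
    · rw [rank_zero, partialIdentity_zero]
      exact refl 0
    · exact ih m (by omega) hT hT₁
  have hrank : A.rank = 1 + T.rank := by
    rw [hAT.rank_eq, rank_fromBlocks_zero_zero, rank_one, Fintype.card_fin]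
  rw [hrank]
  refine (hAT.trans ((refl _).fromBlocks_congr hTr)).trans ?_
  rw [← partialIdentity_add_submatrix]
  exact (submatrix_equiv _ _).symm

end MatrixCongruent

open MatrixCongruent in
theorem stmt_11_general {K : Type*} [Field K] [CharP K 2]
    (hsq : ∀ a : K, IsSquare a) (n : ℕ) :
    (∀ A : Matrix (Fin n) (Fin n) K, A.IsSymm → (∀ i, A i i = 0) →
      Even A.rank ∧
      ∃ P : Matrix (Fin n) (Fin n) K, IsUnit P ∧
        P * A * Pᵀ = Matrix.of (fun i j : Fin n =>
          if i.val < A.rank ∧ j.val < A.rank ∧ i.val / 2 = j.val / 2 ∧ i ≠ j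
          then 1 else 0)) ∧
    (∀ A : Matrix (Fin n) (Fin n) K, A.IsSymm → (∃ i, A i i ≠ 0) →
      ∃ P : Matrix (Fin n) (Fin n) K, IsUnit P ∧
        P * A * Pᵀ = Matrix.of (fun i j : Fin n =>
          if i = j ∧ i.val < A.rank then 1 else 0)) ∧
    (∀ A B : Matrix (Fin n) (Fin n) K, A.IsSymm → B.IsSymm →
      A.rank = B.rank → ((∃ i, A i i ≠ 0) ↔ (∃ i, B i i ≠ 0)) →
      ∃ P : Matrix (Fin n) (Fin n) K, IsUnit P ∧ A = P * B * Pᵀ) := by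
  refine ⟨fun A hA hA₀ => ?_, fun A hA hA₁ => ?_, fun A B hA hB hrank hdiag => ?_⟩
  · obtain ⟨heven, h⟩ := even_rank_and_hyperbolicSum_of_diag_eq_zero hA (funext hA₀)
    exact ⟨heven, h.exists_isUnit⟩
  · exact (partialIdentity_of_diag_ne_zero hsq hA (Function.ne_iff.mpr hA₁)).exists_isUnit
  · suffices h : MatrixCongruent B A by
      obtain ⟨P, hP, hPB⟩ := h.exists_isUnit
      exact ⟨P, hP, hPB.symm⟩
    have hdiag : A.diag = 0 ↔ B.diag = 0 :=
      not_iff_not.mp (Function.ne_iff.trans (hdiag.trans Function.ne_iff.symm))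
    by_cases hA₀ : A.diag = 0
    · have hA' := (even_rank_and_hyperbolicSum_of_diag_eq_zero hA hA₀).2
      have hB' := (even_rank_and_hyperbolicSum_of_diag_eq_zero hB (hdiag.mp hA₀)).2
      exact (hrank ▸ hB').trans hA'.symm
    · have hA' := partialIdentity_of_diag_ne_zero hsq hA hA₀
      have hB' := partialIdentity_of_diag_ne_zero hsq hB (mt hdiag.mpr hA₀)
      exact (hrank ▸ hB').trans hA'.symm

/-- A symmetric matrix over `ℤ₂` is determined up to congruence by its rank and
whether it has a non-zero diagonal entry: if the diagonal vanishes, the rank is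
even and `A` is congruent to `rank(A)/2` copies of `[[0,1],[1,0]]` plus a zero
block; otherwise `A` is congruent to `I_r ⊕ 0` with `r = rank(A)`. Moreover two
symmetric matrices with the same rank and the same diagonal invariant are
congruent. -/
theorem stmt_11 (n : ℕ) :
    (∀ A : Matrix (Fin n) (Fin n) (ZMod 2), A.IsSymm → (∀ i, A i i = 0) →
      Even A.rank ∧
      ∃ P : Matrix (Fin n) (Fin n) (ZMod 2), IsUnit P ∧
        P * A * Pᵀ = Matrix.of (fun i j : Fin n =>
          if i.val < A.rank ∧ j.val < A.rank ∧ i.val / 2 = j.val / 2 ∧ i ≠ j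
          then 1 else 0)) ∧
    (∀ A : Matrix (Fin n) (Fin n) (ZMod 2), A.IsSymm → (∃ i, A i i ≠ 0) →
      ∃ P : Matrix (Fin n) (Fin n) (ZMod 2), IsUnit P ∧
        P * A * Pᵀ = Matrix.of (fun i j : Fin n =>
          if i = j ∧ i.val < A.rank then 1 else 0)) ∧
    (∀ A B : Matrix (Fin n) (Fin n) (ZMod 2), A.IsSymm → B.IsSymm →
      A.rank = B.rank → ((∃ i, A i i ≠ 0) ↔ (∃ i, B i i ≠ 0)) →
      ∃ P : Matrix (Fin n) (Fin n) (ZMod 2), IsUnit P ∧ A = P * B * Pᵀ) :=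
  stmt_11_general isSquare_of_charTwo' n
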